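/- Let m, d ∈ ℕ with d ≥ m, and let X = (X₁,…,Xₙ) be a standard Gaussian random vector in ℝⁿ. There exists a constant C(m,d) > 0 depending only on m and d such that for every non-constant polynomial f(x) = Σ_{j₁=0}^{m} … Σ_{jₙ=0}^{m} a_{j₁,…,jₙ} x₁^{j₁}⋯xₙ^{jₙ} (each variable appearing to a power at most m) of total degree d[f] ≤ d with a[f] = 1, the density ϱ_f of f(X) satisfies σ(ϱ_f, t) ≤ C(m,d) t^{1/m} [ |ln t|^{d−m} + 1 ] for all t > 0. -/

import Mathlib

/-!
Integrating a test function by parts against the Gaussian weight bounds `∫ φ'(p) dγ`, for a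
polynomial `p` in one variable, by `C t / δ` plus a smoothed version of `γ(|p'| ≤ δ)`: one divides
by `p'` regularised at scale `δ`, and the total variation of this quotient is controlled by the
number of its critical points. The smoothed small ball probability is at most `C ε` once
`δ ≤ ε ^ deg p'` times the Mahler measure of `p'`, by factoring `p'` over its complex roots; the
Mahler measure dominates every coefficient. So if `p` has degree at most `m` and a coefficient `c`
of positive degree, then `|∫ φ'(p) dγ| ≤ C s` for `t = |c| s ^ m`.

In several variables one coordinate is resampled at a time, keeping track of a monomial of top
degree `D` whose coefficient is at least one. Bounds on `∫ φ'(f) dγ` imply small ball estimates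
for `f`, through `φ = δ arctan(· / δ)`. Estimating `∫ φ'(f) dγ` by means of a small ball estimate
for a partial derivative of `f` gives the exponent `1 / D` without logarithms, which suffices for
`D ≤ m`. For `D > m`, let `g` be the coefficient of the relevant power of `xᵢ`. Conditionally on
the other variables the integral is at most `C s / |g| ^ (1 / m)` with `t = s ^ m`, and the small
ball estimate for `g`, fed into the layer cake formula, loses one factor `|log s|`. Each such step
lowers `D` by at least one and no logarithm is lost once `D ≤ m`, whence the power `d - m`.

The law of `f` is absolutely continuous because a compact null set carries a test function of
arbitrarily small size whose derivative is one on it.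
-/

open MeasureTheory ProbabilityTheory

/-- The modulus `σ(ϱ, ε) = sup { ∫ φ' ϱ : φ ∈ C₀^∞(ℝ), ‖φ‖_∞ ≤ ε, ‖φ'‖_∞ ≤ 1 }`. -/
noncomputable def sigmaMod (ρ : ℝ → ℝ) (ε : ℝ) : ℝ :=
  sSup {r : ℝ | ∃ φ : ℝ → ℝ, ContDiff ℝ (⊤ : ℕ∞) φ ∧ HasCompactSupport φ ∧
    (∀ x, |φ x| ≤ ε) ∧ (∀ x, |deriv φ x| ≤ 1) ∧ r = ∫ s : ℝ, deriv φ s * ρ s}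

/-- The standard Gaussian measure on `ℝⁿ` (i.i.d. `N(0,1)` coordinates). -/
noncomputable def stdGaussian (n : ℕ) : Measure (Fin n → ℝ) :=
  Measure.pi fun _ => gaussianReal 0 1

/-- `a[f]`: the maximum of the absolute values of the coefficients of the monomials of
top total degree of `f`. -/
noncomputable def topCoeff {n : ℕ} (f : MvPolynomial (Fin n) ℝ) : ℝ :=
  sSup {c : ℝ | ∃ j : Fin n →₀ ℕ, (j.sum fun _ e => e) = f.totalDegree ∧
    c = |MvPolynomial.coeff j f|}

section TotalVariation

open Filter Set

variable {F : ℝ → ℝ} {M : ℝ}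

theorem intervalIntegral_abs_deriv_le_of_deriv_ne_zero (hF : ContDiff ℝ 1 F) (hM : ∀ x, |F x| ≤ M)
    {a b : ℝ} (hab : a ≤ b) (hne : ∀ x ∈ Ioo a b, deriv F x ≠ 0) :
    ∫ x in a..b, |deriv F x| ≤ 2 * M := by
  have hdiff : Differentiable ℝ F := hF.differentiable one_ne_zero
  have hftc : ∫ x in a..b, deriv F x = F b - F a :=
    intervalIntegral.integral_deriv_eq_sub (fun x _ => hdiff x)
      ((hF.continuous_deriv le_rfl).intervalIntegrable a b)
  obtain ⟨⟨hal, hau⟩, hbl, hbu⟩ := And.intro (abs_le.1 (hM a)) (abs_le.1 (hM b))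
  rcases hasDerivWithinAt_forall_lt_or_forall_gt_of_forall_ne (convex_Ioo a b)
    (fun x _ => (hdiff x).hasDerivAt.hasDerivWithinAt) hne with hneg | hpos
  · rw [intervalIntegral.integral_congr_Ioo_of_le hab fun x hx => abs_of_neg (hneg x hx),
      intervalIntegral.integral_neg, hftc]
    linarith
  · rw [intervalIntegral.integral_congr_Ioo_of_le hab fun x hx => abs_of_pos (hpos x hx), hftc]
    linarith

theorem intervalIntegral_abs_deriv_le (hF : ContDiff ℝ 1 F) (hM : ∀ x, |F x| ≤ M) (S : Finset ℝ)
    {a b : ℝ} (hab : a ≤ b) (hS : ∀ x ∈ Ioo a b, deriv F x = 0 → x ∈ S) :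
    ∫ x in a..b, |deriv F x| ≤ 2 * M * (S.card + 1) := by
  have hM0 : 0 ≤ M := (abs_nonneg _).trans (hM 0)
  induction S using Finset.induction_on_max generalizing b with
  | empty =>
    simpa using intervalIntegral_abs_deriv_le_of_deriv_ne_zero hF hM hab fun x hx h0 => by
      simpa using hS x hx h0
  | insert c S hmax ih =>
    have hint (u v : ℝ) : IntervalIntegrable (fun x => |deriv F x|) volume u v :=
      (hF.continuous_deriv le_rfl).abs.intervalIntegrable u v
    rw [Finset.card_insert_of_notMem fun hc => (hmax c hc).false]
    push_cast
    by_cases hc : c ∈ Ioo a b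
    · have hleft : ∫ x in a..c, |deriv F x| ≤ 2 * M * (S.card + 1) :=
        ih hc.1.le fun x hx h0 =>
          Finset.mem_of_mem_insert_of_ne (hS x ⟨hx.1, hx.2.trans hc.2⟩ h0) hx.2.ne
      have hright : ∫ x in c..b, |deriv F x| ≤ 2 * M :=
        intervalIntegral_abs_deriv_le_of_deriv_ne_zero hF hM hc.2.le fun x hx h0 => by
          rcases Finset.mem_insert.1 (hS x ⟨hc.1.trans hx.1, hx.2⟩ h0) with rfl | hxS
          · exact hx.1.false
          · exact (hmax x hxS).not_gt hx.1
      rw [← intervalIntegral.integral_add_adjacent_intervals (hint a c) (hint c b)]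
      linarith
    · have := ih hab fun x hx h0 =>
        Finset.mem_of_mem_insert_of_ne (hS x hx h0) fun h => hc (h ▸ hx)
      linarith

theorem integrable_deriv_of_forall_deriv_eq_zero_mem (hF : ContDiff ℝ 1 F) (hM : ∀ x, |F x| ≤ M)
    (S : Finset ℝ) (hS : ∀ x, deriv F x = 0 → x ∈ S) : Integrable (deriv F) :=
  integrable_of_intervalIntegral_norm_bounded (2 * M * (S.card + 1))
    (fun _ : ℕ => ((hF.continuous_deriv le_rfl).integrableOn_Icc).mono_set Ioc_subset_Icc_self)
    (tendsto_neg_atTop_atBot.comp tendsto_natCast_atTop_atTop) tendsto_natCast_atTop_atTop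
    (Eventually.of_forall fun n => intervalIntegral_abs_deriv_le hF hM S
      (neg_le_self n.cast_nonneg) fun x _ => hS x)

theorem integral_abs_deriv_le (hF : ContDiff ℝ 1 F) (hM : ∀ x, |F x| ≤ M) (S : Finset ℝ)
    (hS : ∀ x, deriv F x = 0 → x ∈ S) : ∫ x, |deriv F x| ≤ 2 * M * (S.card + 1) :=
  le_of_tendsto
    (intervalIntegral_tendsto_integral (integrable_deriv_of_forall_deriv_eq_zero_mem hF hM S hS).abs
      (tendsto_neg_atTop_atBot.comp tendsto_natCast_atTop_atTop) tendsto_natCast_atTop_atTop)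
    (Eventually.of_forall fun n : ℕ => intervalIntegral_abs_deriv_le hF hM S
      (neg_le_self n.cast_nonneg) fun x _ => hS x)

end TotalVariation

section Gaussian

variable (x : ℝ)

theorem hasDerivAt_gaussianPDFReal (μ : ℝ) (v : NNReal) :
    HasDerivAt (gaussianPDFReal μ v) (-((x - μ) / v) * gaussianPDFReal μ v x) x := by
  have hexponent : HasDerivAt (fun y => -(y - μ) ^ 2 / (2 * v)) (-((x - μ) / v)) x :=
    ((((hasDerivAt_id x).sub_const μ).pow 2).neg.div_const (2 * (v : ℝ))).congr_deriv (by
      rcases eq_or_ne (v : ℝ) 0 with hv | hv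
      · simp [hv]
      · simp only [id_eq, Nat.cast_ofNat, Nat.add_one_sub_one, pow_one]; field_simp)
  exact (hexponent.exp.const_mul (√(2 * Real.pi * v))⁻¹).congr_deriv (by
    rw [gaussianPDFReal]; ring)

theorem contDiff_gaussianPDFReal (μ : ℝ) (v : NNReal) : ContDiff ℝ 1 (gaussianPDFReal μ v) := by
  unfold gaussianPDFReal
  fun_prop

theorem deriv_gaussianPDFReal_zero_one :
    deriv (gaussianPDFReal 0 1) x = -x * gaussianPDFReal 0 1 x := by
  simpa using (hasDerivAt_gaussianPDFReal x 0 1).deriv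

theorem gaussianPDFReal_zero_one_le_exp : gaussianPDFReal 0 1 x ≤ Real.exp (-(x ^ 2 / 2)) := by
  have hsqrt : 1 ≤ √(2 * Real.pi) := Real.one_le_sqrt.2 (by linarith [Real.pi_gt_three])
  simpa [gaussianPDFReal, neg_div] using
    mul_le_of_le_one_left (Real.exp_pos (-(x ^ 2 / 2))).le (inv_le_one_of_one_le₀ hsqrt)

theorem gaussianPDFReal_zero_one_le_one : gaussianPDFReal 0 1 x ≤ 1 :=
  (gaussianPDFReal_zero_one_le_exp x).trans (Real.exp_le_one_iff.2 (by nlinarith [sq_nonneg x]))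

theorem abs_mul_gaussianPDFReal_zero_one_le_one : |x| * gaussianPDFReal 0 1 x ≤ 1 :=
  calc |x| * gaussianPDFReal 0 1 x ≤ |x| * Real.exp (-(x ^ 2 / 2)) := by
        gcongr; exact gaussianPDFReal_zero_one_le_exp x
    _ ≤ Real.exp (x ^ 2 / 2) * Real.exp (-(x ^ 2 / 2)) := by
        gcongr
        linarith [Real.add_one_le_exp (x ^ 2 / 2), sq_nonneg (|x| - 1), sq_abs x]
    _ = 1 := by rw [← Real.exp_add, add_neg_cancel, Real.exp_zero]

theorem abs_gaussianPDFReal_zero_one_le_one : |gaussianPDFReal 0 1 x| ≤ 1 := by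
  rw [abs_of_nonneg (gaussianPDFReal_nonneg 0 1 x)]
  exact gaussianPDFReal_zero_one_le_one x

theorem deriv_gaussianPDFReal_zero_one_eq_zero_iff :
    deriv (gaussianPDFReal 0 1) x = 0 ↔ x = 0 := by
  simp [deriv_gaussianPDFReal_zero_one, (gaussianPDFReal_pos 0 1 x one_ne_zero).ne']

theorem integrable_deriv_gaussianPDFReal : Integrable (deriv (gaussianPDFReal 0 1)) :=
  integrable_deriv_of_forall_deriv_eq_zero_mem (contDiff_gaussianPDFReal 0 1)
    abs_gaussianPDFReal_zero_one_le_one {0} fun x h =>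
      Finset.mem_singleton.2 ((deriv_gaussianPDFReal_zero_one_eq_zero_iff x).1 h)

theorem integral_abs_deriv_gaussianPDFReal_le : ∫ x, |deriv (gaussianPDFReal 0 1) x| ≤ 4 := by
  have h := integral_abs_deriv_le (contDiff_gaussianPDFReal 0 1)
    abs_gaussianPDFReal_zero_one_le_one {0} fun x h =>
      Finset.mem_singleton.2 ((deriv_gaussianPDFReal_zero_one_eq_zero_iff x).1 h)
  norm_num at h
  exact h

theorem integrable_gaussianReal_iff {F : ℝ → ℝ} :
    Integrable F (gaussianReal 0 1) ↔ Integrable fun x => gaussianPDFReal 0 1 x * F x := by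
  rw [gaussianReal_of_var_ne_zero 0 one_ne_zero, integrable_withDensity_iff_integrable_smul'
    (measurable_gaussianPDF 0 1) (.of_forall fun _ => gaussianPDF_lt_top)]
  simp only [toReal_gaussianPDF, smul_eq_mul]

theorem integral_gaussianReal_eq_integral_mul (F : ℝ → ℝ) :
    ∫ x, F x ∂gaussianReal 0 1 = ∫ x, gaussianPDFReal 0 1 x * F x := by
  simp only [integral_gaussianReal_eq_integral_smul one_ne_zero, smul_eq_mul]

variable {F w : ℝ → ℝ} {t B : ℝ}

theorem integral_deriv_mul_gaussianReal (hF : ContDiff ℝ 1 F) (hw : ContDiff ℝ 1 w)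
    (ht : ∀ x, |F x| ≤ t) (hB : ∀ x, |w x| ≤ B) (hw' : Integrable (deriv w))
    (hFw : Integrable (fun x => deriv F x * w x) (gaussianReal 0 1)) :
    ∫ x, deriv F x * w x ∂gaussianReal 0 1 =
      -∫ x, (deriv w x * gaussianPDFReal 0 1 x + w x * deriv (gaussianPDFReal 0 1) x) * F x := by
  have hg := contDiff_gaussianPDFReal 0 1
  have hderiv (x : ℝ) : HasDerivAt (fun x => w x * gaussianPDFReal 0 1 x)
      (deriv w x * gaussianPDFReal 0 1 x + w x * deriv (gaussianPDFReal 0 1) x) x :=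
    (hw.differentiable one_ne_zero x).hasDerivAt.mul
      (hg.differentiable one_ne_zero x).hasDerivAt
  have hw'g : Integrable fun x => deriv w x * gaussianPDFReal 0 1 x :=
    hw'.mul_bdd hg.continuous.aestronglyMeasurable
      (.of_forall abs_gaussianPDFReal_zero_one_le_one)
  have hwg' : Integrable fun x => w x * deriv (gaussianPDFReal 0 1) x :=
    integrable_deriv_gaussianPDFReal.bdd_mul hw.continuous.aestronglyMeasurable (.of_forall hB)
  have hwg : Integrable fun x => w x * gaussianPDFReal 0 1 x :=
    (integrable_gaussianPDFReal 0 1).bdd_mul hw.continuous.aestronglyMeasurable (.of_forall hB)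
  have hparts := integral_mul_deriv_eq_deriv_mul_of_integrable (fun x _ => hderiv x)
    (fun x _ => (hF.differentiable one_ne_zero x).hasDerivAt)
    ((integrable_gaussianReal_iff.1 hFw).congr (.of_forall fun x => by
      simp only [Pi.mul_apply]; ring))
    ((hw'g.add hwg').mul_bdd hF.continuous.aestronglyMeasurable (.of_forall ht))
    (hwg.mul_bdd hF.continuous.aestronglyMeasurable (.of_forall ht))
  rw [integral_gaussianReal_eq_integral_mul, ← hparts]
  exact integral_congr_ae (.of_forall fun x => by ring)

theorem abs_integral_deriv_mul_gaussianReal_le (hF : ContDiff ℝ 1 F) (hw : ContDiff ℝ 1 w)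
    (ht : ∀ x, |F x| ≤ t) (hB : ∀ x, |w x| ≤ B) (hw' : Integrable (deriv w))
    (hFw : Integrable (fun x => deriv F x * w x) (gaussianReal 0 1)) :
    |∫ x, deriv F x * w x ∂gaussianReal 0 1| ≤ t * ((∫ x, |deriv w x|) + 4 * B) := by
  have hB0 : 0 ≤ B := (abs_nonneg _).trans (hB 0)
  have hg' := integrable_deriv_gaussianPDFReal.abs.mul_const B
  rw [integral_deriv_mul_gaussianReal hF hw ht hB hw' hFw, abs_neg]
  calc |∫ x, (deriv w x * gaussianPDFReal 0 1 x + w x * deriv (gaussianPDFReal 0 1) x) * F x|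
      ≤ ∫ x, (|deriv w x| + |deriv (gaussianPDFReal 0 1) x| * B) * t := by
        refine (Real.norm_eq_abs _).ge.trans
          (norm_integral_le_of_norm_le ((hw'.abs.add hg').mul_const t) (.of_forall fun x => ?_))
        rw [norm_mul]
        gcongr
        · refine (norm_add_le _ _).trans (add_le_add ?_ ?_)
          · rw [norm_mul]
            exact mul_le_of_le_one_right (norm_nonneg _) (abs_gaussianPDFReal_zero_one_le_one x)
          · rw [norm_mul, mul_comm]
            exact mul_le_mul_of_nonneg_left (hB x) (norm_nonneg _)
        · exact ht x
    _ = t * ((∫ x, |deriv w x|) + (∫ x, |deriv (gaussianPDFReal 0 1) x|) * B) := by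
        rw [integral_mul_const, integral_add hw'.abs hg', integral_mul_const, mul_comm]
    _ ≤ t * ((∫ x, |deriv w x|) + 4 * B) := by
        gcongr
        · exact (abs_nonneg _).trans (ht 0)
        · exact integral_abs_deriv_gaussianPDFReal_le

end Gaussian

section TestFunctions

open Filter Set Topology

/-- A test function at level `t`: a `C¹` function bounded by `t` with derivative bounded by `1`.
Compared with the test functions in `sigmaMod`, compact support is dropped and smoothness is
weakened, so that rescaled arctangents and primitives of continuous bumps are admitted. -/
structure IsTestFunction (t : ℝ) (φ : ℝ → ℝ) : Prop where
  contDiff : ContDiff ℝ 1 φ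
  abs_le (u : ℝ) : |φ u| ≤ t
  abs_deriv_le (u : ℝ) : |deriv φ u| ≤ 1

/-- The law of `X` under `μ` satisfies `σ(law, t) ≤ B`, the modulus being taken over the test
functions at level `t`; no density is required. -/
def SigmaBound {Ω : Type*} [MeasurableSpace Ω] (X : Ω → ℝ) (μ : Measure Ω) (t B : ℝ) : Prop :=
  ∀ φ, IsTestFunction t φ → |∫ ω, deriv φ (X ω) ∂μ| ≤ B

theorem IsTestFunction.mono {t t' : ℝ} {φ : ℝ → ℝ} (h : IsTestFunction t φ) (ht : t ≤ t') :
    IsTestFunction t' φ :=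
  ⟨h.contDiff, fun u => (h.abs_le u).trans ht, h.abs_deriv_le⟩

theorem IsTestFunction.continuous_deriv {t : ℝ} {φ : ℝ → ℝ} (h : IsTestFunction t φ) :
    Continuous (deriv φ) :=
  h.contDiff.continuous_deriv le_rfl

theorem hasDerivAt_mul_arctan_div {δ : ℝ} (hδ : δ ≠ 0) (u : ℝ) :
    HasDerivAt (fun u => δ * Real.arctan (u / δ)) (1 + (u / δ) ^ 2)⁻¹ u :=
  ((((hasDerivAt_id' u).div_const δ).arctan).const_mul δ).congr_deriv (by field_simp)

theorem isTestFunction_arctan {δ : ℝ} (hδ : 0 < δ) :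
    IsTestFunction (2 * δ) fun u => δ * Real.arctan (u / δ) where
  contDiff := contDiff_const.mul (Real.contDiff_arctan.comp (contDiff_id.div_const δ))
  abs_le u := by
    rw [abs_mul, abs_of_pos hδ, mul_comm]
    gcongr
    rw [abs_le]
    constructor <;> linarith [Real.neg_pi_div_two_lt_arctan (u / δ),
      Real.arctan_lt_pi_div_two (u / δ), Real.pi_lt_four]
  abs_deriv_le u := by
    rw [(hasDerivAt_mul_arctan_div hδ.ne' u).deriv, abs_of_pos (by positivity)]
    exact inv_le_one_of_one_le₀ (le_add_of_nonneg_right (sq_nonneg _))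

variable {Ω : Type*} [MeasurableSpace Ω] {μ : Measure Ω} {X : Ω → ℝ} {t t' B B' δ : ℝ}

theorem IsTestFunction.integrable_deriv_comp [IsFiniteMeasure μ] {φ : ℝ → ℝ}
    (h : IsTestFunction t φ) (hX : AEMeasurable X μ) : Integrable (fun ω => deriv φ (X ω)) μ :=
  .of_bound (h.continuous_deriv.measurable.comp_aemeasurable hX).aestronglyMeasurable 1
    (.of_forall fun ω => h.abs_deriv_le (X ω))

theorem SigmaBound.mono (h : SigmaBound X μ t B) (ht : t' ≤ t) (hB : B ≤ B') :
    SigmaBound X μ t' B' :=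
  fun φ hφ => (h φ (hφ.mono ht)).trans hB

theorem sigmaBound_one [IsProbabilityMeasure μ] : SigmaBound X μ t 1 := fun φ hφ => by
  simpa using norm_integral_le_of_norm_le_const (μ := μ) (f := fun ω => deriv φ (X ω))
    (.of_forall fun ω => hφ.abs_deriv_le (X ω))

theorem SigmaBound.map (h : SigmaBound X μ t B) (hX : AEMeasurable X μ) :
    SigmaBound id (μ.map X) t B := fun φ hφ => by
  simp only [id_eq, integral_map hX hφ.continuous_deriv.aestronglyMeasurable]
  exact h φ hφ

theorem SigmaBound.integral_inv_one_add_div_sq_le (h : SigmaBound X μ (2 * δ) B) (hδ : 0 < δ) :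
    ∫ ω, (1 + (X ω / δ) ^ 2)⁻¹ ∂μ ≤ B := by
  have := (le_abs_self _).trans (h _ (isTestFunction_arctan hδ))
  simpa only [(hasDerivAt_mul_arctan_div hδ.ne' _).deriv] using this

theorem integrable_inv_one_add_comp_sq [IsFiniteMeasure μ] (hX : AEMeasurable X μ) :
    Integrable (fun ω => (1 + X ω ^ 2)⁻¹) μ :=
  .of_bound (by fun_prop) 1 (.of_forall fun ω => by
    rw [Real.norm_of_nonneg (by positivity)]
    exact inv_le_one_of_one_le₀ (le_add_of_nonneg_right (sq_nonneg _)))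

theorem SigmaBound.measureReal_abs_le_le [IsFiniteMeasure μ] (h : SigmaBound X μ (2 * δ) B)
    (hδ : 0 < δ) (hX : AEMeasurable X μ) : μ.real {ω | |X ω| ≤ δ} ≤ 2 * B := by
  have hsub : {ω | |X ω| ≤ δ} ⊆ {ω | 1 / 2 ≤ (1 + (X ω / δ) ^ 2)⁻¹} := fun ω hω => by
    have hle : (X ω / δ) ^ 2 ≤ 1 := by
      rw [sq_le_one_iff_abs_le_one, abs_div, abs_of_pos hδ]
      exact div_le_one_of_le₀ hω hδ.le
    rw [mem_ofPred_eq, one_div]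
    gcongr
    linarith
  have hmarkov := mul_meas_ge_le_integral_of_nonneg (.of_forall fun ω => by positivity)
    (integrable_inv_one_add_comp_sq (hX.div_const δ)) (1 / 2)
  linarith [measureReal_mono (μ := μ) hsub, h.integral_inv_one_add_div_sq_le hδ]

theorem exists_isTestFunction_deriv_eq_one {K : Set ℝ} (hK : IsClosed K) (hK0 : volume K = 0)
    {t : ℝ} (ht : 0 < t) :
    ∃ φ, IsTestFunction t φ ∧ (∀ u, 0 ≤ deriv φ u) ∧ ∀ u ∈ K, deriv φ u = 1 := by
  obtain ⟨U, hKU, hU, hUt⟩ := K.exists_isOpen_lt_of_lt (μ := volume) (ENNReal.ofReal t)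
    (by rwa [hK0, ENNReal.ofReal_pos])
  obtain ⟨g, hgU, hgK, hg⟩ := exists_continuous_zero_one_of_isClosed hU.isClosed_compl hK
    (disjoint_compl_left_iff_subset.2 hKU)
  have hderiv (u : ℝ) : deriv (fun x => ∫ y in (0 : ℝ)..x, g y) u = g u :=
    g.continuous.deriv_integral g 0 u
  have hbound (u : ℝ) : |∫ y in (0 : ℝ)..u, g y| ≤ t :=
    calc |∫ y in (0 : ℝ)..u, g y| = |∫ y in uIoc 0 u ∩ U, g y| := by
          rw [intervalIntegral.abs_integral_eq_abs_integral_uIoc,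
            setIntegral_eq_of_subset_of_forall_sdiff_eq_zero measurableSet_uIoc inter_subset_left
              fun y hy => hgU fun hyU => hy.2 ⟨hy.1, hyU⟩]
      _ ≤ 1 * volume.real (uIoc 0 u ∩ U) :=
          norm_setIntegral_le_of_norm_le_const (f := g)
            ((measure_mono inter_subset_right).trans_lt (hUt.trans ENNReal.ofReal_lt_top))
            fun y _ => by simpa [abs_of_nonneg (hg y).1] using (hg y).2
      _ ≤ t := by
          rw [one_mul]
          exact ENNReal.toReal_le_of_le_ofReal ht.le
            ((measure_mono inter_subset_right).trans hUt.le)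
  refine ⟨_, ⟨contDiff_one_iff_deriv.2 ⟨fun u => ?_, ?_⟩, hbound, fun u => ?_⟩, fun u => ?_,
    fun u hu => ?_⟩
  · exact (intervalIntegral.integral_hasDerivAt_right (g.continuous.intervalIntegrable 0 u)
      (g.continuous.stronglyMeasurableAtFilter _ _) g.continuous.continuousAt).differentiableAt
  · simpa only [funext hderiv] using g.continuous
  · simpa only [hderiv, abs_of_nonneg (hg u).1] using (hg u).2
  · simpa only [hderiv] using (hg u).1
  · exact (hderiv u).trans (hgK hu)

theorem absolutelyContinuous_of_sigmaBound {ν : Measure ℝ} [IsFiniteMeasure ν] {B : ℝ → ℝ}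
    (h : ∀ t > 0, SigmaBound id ν t (B t)) (hB : Tendsto B (𝓝[>] 0) (𝓝 0)) : ν ≪ volume := by
  refine .mk fun A hA hA0 => ?_
  simp only [hA.measure_eq_iSup_isCompact, ENNReal.iSup_eq_zero]
  intro K hKA hK
  have hle : ∀ t > 0, ν.real K ≤ B t := fun t ht => by
    obtain ⟨φ, hφ, hφ0, hφ1⟩ :=
      exists_isTestFunction_deriv_eq_one hK.isClosed (measure_mono_null hKA hA0) ht
    calc ν.real K = ∫ u, K.indicator 1 u ∂ν := (integral_indicator_one hK.measurableSet).symm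
      _ ≤ ∫ u, deriv φ u ∂ν := by
          refine integral_mono ((integrable_const 1).indicator hK.measurableSet)
            (hφ.integrable_deriv_comp aemeasurable_id) fun u => ?_
          exact indicator_le' (fun u hu => (hφ1 u hu).ge) (fun u _ => hφ0 u) u
      _ ≤ B t := (le_abs_self _).trans (h t ht φ hφ)
  exact (measureReal_eq_zero_iff).1 (le_antisymm
    (ge_of_tendsto hB (eventually_nhdsWithin_of_forall hle)) measureReal_nonneg)

theorem SigmaBound.sigmaMod_le {ν : Measure ℝ} [SigmaFinite ν] (h : SigmaBound id ν t B)
    (hν : ν ≪ volume) (hB : 0 ≤ B) :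
    sigmaMod (fun s => (ν.rnDeriv volume s).toReal) t ≤ B := by
  refine Real.sSup_le ?_ hB
  rintro r ⟨φ, hφ, -, hφt, hφ1, rfl⟩
  have hint : ∫ s, deriv φ s * (ν.rnDeriv volume s).toReal = ∫ s, deriv φ s ∂ν := by
    simp only [← integral_rnDeriv_smul hν, smul_eq_mul, mul_comm]
  exact hint ▸ (le_abs_self _).trans (h φ ⟨hφ.of_le (mod_cast le_top), hφt, hφ1⟩)

theorem withDensity_ofReal_toReal_rnDeriv {ν : Measure ℝ} [IsFiniteMeasure ν] (hν : ν ≪ volume) :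
    volume.withDensity (fun s => ENNReal.ofReal (ν.rnDeriv volume s).toReal) = ν := by
  rw [withDensity_congr_ae (ofReal_toReal_ae_eq (ν.rnDeriv_lt_top volume)),
    Measure.withDensity_rnDeriv_eq ν volume hν]

end TestFunctions

section OneVariable

open Polynomial

/-- The reciprocal of `u` regularised at scale `δ`. Integrating by parts against it recovers
`deriv φ ∘ p` from the derivative of `φ ∘ p`, up to an error living where `|p'| ≲ δ`. -/
noncomputable def regInv (δ u : ℝ) : ℝ := u / (δ ^ 2 + u ^ 2)

variable {δ t : ℝ} {φ : ℝ → ℝ}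

theorem abs_regInv_le (hδ : 0 < δ) (u : ℝ) : |regInv δ u| ≤ 1 / (2 * δ) := by
  rw [regInv, abs_div, abs_of_pos (by positivity : 0 < δ ^ 2 + u ^ 2),
    div_le_div_iff₀ (by positivity) (by positivity)]
  nlinarith [sq_nonneg (δ - |u|), sq_abs u]

theorem one_sub_mul_regInv (hδ : 0 < δ) (u : ℝ) : 1 - u * regInv δ u = (1 + (u / δ) ^ 2)⁻¹ := by
  rw [regInv]
  field_simp
  ring

theorem hasDerivAt_regInv (hδ : 0 < δ) (u : ℝ) :
    HasDerivAt (regInv δ) ((δ ^ 2 - u ^ 2) / (δ ^ 2 + u ^ 2) ^ 2) u :=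
  ((hasDerivAt_id' u).div (((hasDerivAt_id' u).pow 2).const_add (δ ^ 2))
    (by positivity : δ ^ 2 + u ^ 2 ≠ 0)).congr_deriv (by norm_num; ring)

theorem contDiff_regInv (hδ : 0 < δ) : ContDiff ℝ 1 (regInv δ) :=
  contDiff_id.div (contDiff_const.add (contDiff_id.pow 2)) fun u =>
    (by positivity : δ ^ 2 + u ^ 2 ≠ 0)

theorem contDiff_regInv_comp_eval (hδ : 0 < δ) (q : ℝ[X]) :
    ContDiff ℝ 1 fun x => regInv δ (q.eval x) :=
  (contDiff_regInv hδ).comp (q.contDiff_aeval 1)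

theorem exists_finset_zeros_deriv_regInv (hδ : 0 < δ) {q : ℝ[X]} (hq : q.natDegree ≠ 0) :
    ∃ S : Finset ℝ, S.card + 1 ≤ 3 * q.natDegree ∧
      ∀ x, deriv (fun x => regInv δ (q.eval x)) x = 0 → x ∈ S := by
  let P := derivative q * (C (δ ^ 2) - q ^ 2)
  have hq' : derivative q ≠ 0 := fun h => hq (derivative_eq_zero.1 h)
  have hδq : C (δ ^ 2) - q ^ 2 ≠ 0 := fun h => hq (by
    simpa using (congrArg natDegree (sub_eq_zero.1 h)).symm)
  have hcard : P.roots.toFinset.card ≤ P.natDegree :=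
    (Multiset.toFinset_card_le _).trans (card_roots' _)
  have hdeg : P.natDegree ≤ (q.natDegree - 1) + 2 * q.natDegree :=
    natDegree_mul_le_of_le (natDegree_derivative_le q)
      ((natDegree_sub_le_of_le (natDegree_C _).le (natDegree_pow_le_of_le 2 le_rfl)).trans_eq
        (Nat.zero_max _))
  refine ⟨P.roots.toFinset, by omega, fun x hx => ?_⟩
  have hderiv : HasDerivAt (fun x => regInv δ (q.eval x))
      ((δ ^ 2 - q.eval x ^ 2) / (δ ^ 2 + q.eval x ^ 2) ^ 2 * q.derivative.eval x) x :=
    HasDerivAt.comp (h₂ := regInv δ) x (hasDerivAt_regInv hδ (q.eval x)) (q.hasDerivAt x)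
  have hpos : (δ ^ 2 + q.eval x ^ 2) ^ 2 ≠ 0 := by positivity
  rw [Multiset.mem_toFinset, mem_roots (mul_ne_zero hq' hδq), IsRoot.def]
  simp only [eval_mul, eval_sub, eval_C, eval_pow]
  rcases mul_eq_zero.1 (hderiv.deriv ▸ hx) with h | h
  · rw [(div_eq_zero_iff.1 h).resolve_right hpos, mul_zero]
  · rw [h, zero_mul]

theorem integrable_deriv_regInv_comp_eval (hδ : 0 < δ) (q : ℝ[X]) :
    Integrable (deriv fun x => regInv δ (q.eval x)) := by
  by_cases hq : q.natDegree = 0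
  · obtain ⟨c, rfl⟩ := natDegree_eq_zero.1 hq
    simp
  · obtain ⟨S, -, hS⟩ := exists_finset_zeros_deriv_regInv hδ hq
    exact integrable_deriv_of_forall_deriv_eq_zero_mem (contDiff_regInv_comp_eval hδ q)
      (fun x => abs_regInv_le hδ (q.eval x)) S hS

theorem integral_abs_deriv_regInv_comp_eval_le (hδ : 0 < δ) (q : ℝ[X]) :
    ∫ x, |deriv (fun x => regInv δ (q.eval x)) x| ≤ 3 * q.natDegree / δ := by
  by_cases hq : q.natDegree = 0
  · obtain ⟨c, rfl⟩ := natDegree_eq_zero.1 hq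
    simp
  · obtain ⟨S, hcard, hS⟩ := exists_finset_zeros_deriv_regInv hδ hq
    calc _ ≤ 2 * (1 / (2 * δ)) * (S.card + 1) :=
          integral_abs_deriv_le (contDiff_regInv_comp_eval hδ q)
            (fun x => abs_regInv_le hδ (q.eval x)) S hS
      _ = ((S.card + 1 : ℕ) : ℝ) / δ := by push_cast; field_simp
      _ ≤ 3 * q.natDegree / δ := by gcongr; exact mod_cast hcard

theorem IsTestFunction.deriv_comp_eval (hφ : IsTestFunction t φ) (p : ℝ[X]) (x : ℝ) :
    deriv (fun x => φ (p.eval x)) x = deriv φ (p.eval x) * p.derivative.eval x :=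
  ((hφ.contDiff.differentiable one_ne_zero _).hasDerivAt.comp x (p.hasDerivAt x)).deriv

theorem IsTestFunction.contDiff_comp_eval (hφ : IsTestFunction t φ) (p : ℝ[X]) :
    ContDiff ℝ 1 fun x => φ (p.eval x) :=
  hφ.contDiff.comp (p.contDiff_aeval 1)

theorem IsTestFunction.abs_integral_comp_eval_le (hφ : IsTestFunction t φ) (p : ℝ[X])
    (hδ : 0 < δ) :
    |∫ x, deriv φ (p.eval x) ∂gaussianReal 0 1| ≤ (3 * p.natDegree + 2) * t / δ +
      ∫ x, (1 + (p.derivative.eval x / δ) ^ 2)⁻¹ ∂gaussianReal 0 1 := by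
  have ht : 0 ≤ t := (abs_nonneg _).trans (hφ.abs_le 0)
  set γ := gaussianReal 0 1
  set q := p.derivative
  have hint : Integrable (fun x => deriv φ (p.eval x)) γ :=
    hφ.integrable_deriv_comp (by fun_prop)
  have hlor : Integrable (fun x => (1 + (q.eval x / δ) ^ 2)⁻¹) γ :=
    integrable_inv_one_add_comp_sq (X := fun x => q.eval x / δ) (by fun_prop)
  have herr : Integrable (fun x => deriv φ (p.eval x) * (1 + (q.eval x / δ) ^ 2)⁻¹) γ :=
    hlor.bdd_mul hint.aestronglyMeasurable (.of_forall fun x => hφ.abs_deriv_le (p.eval x))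
  have hsplit (x : ℝ) : deriv φ (p.eval x) =
      deriv (fun x => φ (p.eval x)) x * regInv δ (q.eval x) +
        deriv φ (p.eval x) * (1 + (q.eval x / δ) ^ 2)⁻¹ := by
    rw [hφ.deriv_comp_eval, ← one_sub_mul_regInv hδ]
    ring
  have hmain : Integrable (fun x => deriv (fun x => φ (p.eval x)) x * regInv δ (q.eval x)) γ :=
    (hint.sub herr).congr (.of_forall fun x => sub_eq_of_eq_add (hsplit x))
  rw [integral_congr_ae (.of_forall hsplit), integral_add hmain herr]
  refine (abs_add_le _ _).trans (add_le_add ?_ ?_)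
  · have hparts := abs_integral_deriv_mul_gaussianReal_le (hφ.contDiff_comp_eval p)
      (contDiff_regInv_comp_eval hδ q) (fun x => hφ.abs_le (p.eval x))
      (fun x => abs_regInv_le hδ (q.eval x)) (integrable_deriv_regInv_comp_eval hδ q) hmain
    have hdeg : (q.natDegree : ℝ) ≤ p.natDegree :=
      mod_cast (natDegree_derivative_le p).trans (Nat.sub_le _ _)
    calc _ ≤ t * ((∫ x, |deriv (fun x => regInv δ (q.eval x)) x|) + 4 * (1 / (2 * δ))) := hparts
      _ ≤ t * (3 * p.natDegree / δ + 4 * (1 / (2 * δ))) := by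
          gcongr
          exact (integral_abs_deriv_regInv_comp_eval_le hδ q).trans (by gcongr)
      _ = (3 * p.natDegree + 2) * t / δ := by field_simp; ring
  · refine (Real.norm_eq_abs _).ge.trans (norm_integral_le_of_norm_le hlor (.of_forall fun x => ?_))
    rw [norm_mul, Real.norm_of_nonneg (by positivity : 0 ≤ (1 + (q.eval x / δ) ^ 2)⁻¹)]
    exact mul_le_of_le_one_left (by positivity) (hφ.abs_deriv_le (p.eval x))

theorem IsTestFunction.abs_integral_comp_eval_le_of_derivative_eq_C (hφ : IsTestFunction t φ)
    {p : ℝ[X]} {c : ℝ} (hp : p.derivative = C c) (hc : c ≠ 0) :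
    |∫ x, deriv φ (p.eval x) ∂gaussianReal 0 1| ≤ 4 * t / |c| := by
  have hderiv (x : ℝ) : deriv (fun x => φ (p.eval x)) x * c⁻¹ = deriv φ (p.eval x) := by
    rw [hφ.deriv_comp_eval, hp, eval_C, mul_inv_cancel_right₀ hc]
  have hparts := abs_integral_deriv_mul_gaussianReal_le (w := fun _ => c⁻¹) (B := |c|⁻¹)
    (hφ.contDiff_comp_eval p) contDiff_const (fun x => hφ.abs_le (p.eval x))
    (fun _ => (abs_inv c).le) (by simp)
    (by simpa only [hderiv] using hφ.integrable_deriv_comp (by fun_prop))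
  simp only [hderiv, deriv_const, abs_zero, integral_zero, zero_add] at hparts
  exact hparts.trans_eq (by ring)

end OneVariable

section MahlerMeasure

open Polynomial

theorem inv_one_add_mul_le {a b : ℝ} (ha : 0 ≤ a) (hb : 0 ≤ b) :
    (1 + a * b)⁻¹ ≤ (1 + a)⁻¹ + (1 + b)⁻¹ := by
  rw [inv_add_inv (by positivity) (by positivity), inv_le_comm₀ (by positivity) (by positivity),
    inv_div, div_le_iff₀ (by positivity)]
  nlinarith [mul_nonneg ha hb, mul_nonneg (mul_nonneg ha hb) (add_nonneg ha hb)]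

theorem inv_one_add_multiset_prod_le_sum {s : Multiset ℝ} (hs : s ≠ 0) (hnn : ∀ a ∈ s, 0 ≤ a) :
    (1 + s.prod)⁻¹ ≤ (s.map fun a => (1 + a)⁻¹).sum := by
  induction s using Multiset.induction_on with
  | empty => exact absurd rfl hs
  | cons a s ih =>
    have hs_nn : ∀ b ∈ s, 0 ≤ b := fun b hb => hnn b (Multiset.mem_cons_of_mem hb)
    simp only [Multiset.prod_cons, Multiset.map_cons, Multiset.sum_cons]
    rcases eq_or_ne s 0 with rfl | hs
    · simp
    · grw [inv_one_add_mul_le (hnn a (Multiset.mem_cons_self a s)) (Multiset.prod_nonneg hs_nn),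
        ih hs hs_nn]

theorem gaussianPDFReal_mul_inv_one_add_norm_sub_div_sq_le (z : ℂ) {ε : ℝ} (hε : 0 < ε) (x : ℝ) :
    gaussianPDFReal 0 1 x * (1 + (‖(x - z : ℂ)‖ / (ε * max 1 ‖z‖)) ^ 2)⁻¹ ≤
      2 / max 1 ‖z‖ * (1 + ((x - z.re) / (ε * max 1 ‖z‖)) ^ 2)⁻¹ +
        gaussianPDFReal 0 1 x * ε := by
  set g := gaussianPDFReal 0 1 x
  set w := max 1 ‖z‖
  have hg : 0 ≤ g := gaussianPDFReal_nonneg 0 1 x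
  have hw : 0 < w := lt_max_of_lt_left one_pos
  rcases le_or_gt g (2 / w) with hgw | hgw
  · have hre : |x - z.re| ≤ ‖(x - z : ℂ)‖ := by
      simpa using Complex.abs_re_le_norm (x - z : ℂ)
    refine le_add_of_le_of_nonneg ?_ (by positivity)
    rw [← sq_abs ((x - z.re) / _), abs_div, abs_of_pos (by positivity : 0 < ε * w)]
    gcongr
  · -- A large density puts `x` close to the origin compared with `z`, so `‖x - z‖ ≥ ‖z‖ / 2`.
    refine le_add_of_nonneg_of_le (by positivity) (mul_le_mul_of_nonneg_left ?_ hg)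
    have hw2 : 2 < w := by
      rw [div_lt_iff₀ hw] at hgw
      nlinarith [gaussianPDFReal_zero_one_le_one x]
    have hwz : w = ‖z‖ := max_eq_right (not_lt.1 fun h => by simp [w, h.le] at hw2)
    have hx : |x| ≤ w / 2 := by
      rw [div_lt_iff₀ hw] at hgw
      nlinarith [abs_mul_gaussianPDFReal_zero_one_le_one x, abs_nonneg x]
    have hnorm : w / 2 ≤ ‖(x - z : ℂ)‖ := by
      have := norm_sub_norm_le z x
      rw [Complex.norm_real, Real.norm_eq_abs, ← hwz, norm_sub_rev] at this
      linarith
    have hdiv : 1 / (2 * ε) ≤ ‖(x - z : ℂ)‖ / (ε * w) := by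
      rw [div_le_div_iff₀ (by positivity) (by positivity)]
      nlinarith
    calc (1 + (‖(x - z : ℂ)‖ / (ε * w)) ^ 2)⁻¹ ≤ (1 + (1 / (2 * ε)) ^ 2)⁻¹ := by gcongr
      _ ≤ (2 * (1 / (2 * ε)))⁻¹ := by
          gcongr
          simpa only [mul_one, one_pow] using two_mul_le_add_sq 1 (1 / (2 * ε))
      _ = ε := by field_simp

theorem integral_inv_one_add_norm_sub_div_sq_le (z : ℂ) {ε : ℝ} (hε : 0 < ε) :
    ∫ x : ℝ, (1 + (‖(x - z : ℂ)‖ / (ε * max 1 ‖z‖)) ^ 2)⁻¹ ∂gaussianReal 0 1 ≤ 8 * ε := by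
  set w := max 1 ‖z‖
  have hw : 0 < w := lt_max_of_lt_left one_pos
  have hεw : ε * w ≠ 0 := by positivity
  have hcauchy : Integrable fun x : ℝ => (1 + ((x - z.re) / (ε * w)) ^ 2)⁻¹ :=
    (integrable_inv_one_add_sq.comp_div hεw).comp_sub_right z.re
  have hcauchy_integral : ∫ x : ℝ, (1 + ((x - z.re) / (ε * w)) ^ 2)⁻¹ = ε * w * Real.pi := by
    rw [integral_sub_right_eq_self (fun x => (1 + (x / (ε * w)) ^ 2)⁻¹) z.re,
      Measure.integral_comp_div (fun x => (1 + x ^ 2)⁻¹), integral_univ_inv_one_add_sq,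
      smul_eq_mul, abs_of_pos (by positivity)]
  have hlhs : Integrable (fun x : ℝ => (1 + (‖(x - z : ℂ)‖ / (ε * w)) ^ 2)⁻¹)
      (gaussianReal 0 1) :=
    integrable_inv_one_add_comp_sq (X := fun x : ℝ => ‖(x - z : ℂ)‖ / (ε * w)) (by fun_prop)
  have hpdf := integrable_gaussianPDFReal 0 1
  rw [integral_gaussianReal_eq_integral_mul]
  calc _ ≤ ∫ x, (2 / w * (1 + ((x - z.re) / (ε * w)) ^ 2)⁻¹ + gaussianPDFReal 0 1 x * ε) :=
        integral_mono (integrable_gaussianReal_iff.1 hlhs)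
          ((hcauchy.const_mul _).add (hpdf.mul_const _))
          (gaussianPDFReal_mul_inv_one_add_norm_sub_div_sq_le z hε)
    _ = 2 / w * (ε * w * Real.pi) + 1 * ε := by
        rw [integral_add (hcauchy.const_mul _) (hpdf.mul_const _), integral_const_mul,
          integral_mul_const, hcauchy_integral, integral_gaussianPDFReal_eq_one 0 one_ne_zero]
    _ = (2 * Real.pi + 1) * ε := by field_simp
    _ ≤ 8 * ε := by gcongr; linarith [Real.pi_lt_d2]

theorem norm_eval_div_mahlerMeasure_eq_prod {P : ℂ[X]} (hP : P ≠ 0) (ε : ℝ) (x : ℂ) :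
    ‖P.eval x‖ / (ε ^ P.natDegree * P.mahlerMeasure) =
      (P.roots.map fun z => ‖x - z‖ / (ε * max 1 ‖z‖)).prod := by
  have hsplits := IsAlgClosed.splits P
  rw [Multiset.prod_map_div, Multiset.prod_map_mul, Multiset.map_const', Multiset.prod_replicate,
    ← hsplits.natDegree_eq_card_roots, hsplits.eval_eq_prod_roots,
    mahlerMeasure_eq_leadingCoeff_mul_prod_roots, norm_mul, mul_left_comm,
    mul_div_mul_left _ _ (norm_ne_zero_iff.2 (leadingCoeff_ne_zero.2 hP)), ← normHom_apply,
    map_multiset_prod, Multiset.map_map]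
  rfl

theorem integral_inv_one_add_norm_eval_div_sq_le {P : ℂ[X]} (hP : P.natDegree ≠ 0) {ε : ℝ}
    (hε : 0 < ε) :
    ∫ x : ℝ, (1 + (‖P.eval (x : ℂ)‖ / (ε ^ P.natDegree * P.mahlerMeasure)) ^ 2)⁻¹
      ∂gaussianReal 0 1 ≤ 8 * P.natDegree * ε := by
  have hP0 : P ≠ 0 := fun h => hP (by simp [h])
  have hcard : P.roots.card = P.natDegree := (IsAlgClosed.splits P).natDegree_eq_card_roots.symm
  have hroots : P.roots ≠ 0 := fun h => hP (by rw [← hcard, h, Multiset.card_zero])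
  set L : ℂ → ℝ → ℝ := fun z x => (1 + (‖(x - z : ℂ)‖ / (ε * max 1 ‖z‖)) ^ 2)⁻¹
  have hL (z : ℂ) : Integrable (L z) (gaussianReal 0 1) :=
    integrable_inv_one_add_comp_sq (X := fun x : ℝ => ‖(x - z : ℂ)‖ / (ε * max 1 ‖z‖))
      (by fun_prop)
  have hpointwise (x : ℝ) :
      (1 + (‖P.eval (x : ℂ)‖ / (ε ^ P.natDegree * P.mahlerMeasure)) ^ 2)⁻¹ ≤
        (P.roots.map fun z => L z x).sum := by
    rw [norm_eval_div_mahlerMeasure_eq_prod hP0, ← Multiset.prod_map_pow]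
    simpa using inv_one_add_multiset_prod_le_sum
      (s := P.roots.map fun z => (‖(x - z : ℂ)‖ / (ε * max 1 ‖z‖)) ^ 2) (by simpa using hroots)
      (by simp only [Multiset.mem_map]; rintro _ ⟨z, -, rfl⟩; positivity)
  simp only [Finset.sum_multiset_map_count, nsmul_eq_mul] at hpointwise
  have hterm (z : ℂ) : Integrable (fun x => P.roots.count z * L z x) (gaussianReal 0 1) :=
    (hL z).const_mul _
  have hlhs : Integrable (fun x : ℝ => (1 + (‖P.eval (x : ℂ)‖ /
      (ε ^ P.natDegree * P.mahlerMeasure)) ^ 2)⁻¹) (gaussianReal 0 1) :=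
    integrable_inv_one_add_comp_sq (X := fun x : ℝ => ‖P.eval (x : ℂ)‖ / _) (by fun_prop)
  calc _ ≤ ∫ x, ∑ z ∈ P.roots.toFinset, P.roots.count z * L z x ∂gaussianReal 0 1 :=
        integral_mono hlhs (integrable_finsetSum _ fun z _ => hterm z) hpointwise
    _ = ∑ z ∈ P.roots.toFinset, P.roots.count z * ∫ x, L z x ∂gaussianReal 0 1 := by
        rw [integral_finsetSum _ fun z _ => hterm z]
        exact Finset.sum_congr rfl fun z _ => integral_const_mul _ _
    _ ≤ ∑ z ∈ P.roots.toFinset, P.roots.count z * (8 * ε) := by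
        gcongr
        exact integral_inv_one_add_norm_sub_div_sq_le _ hε
    _ = 8 * P.natDegree * ε := by
        rw [← Finset.sum_mul, ← Nat.cast_sum, Multiset.toFinset_sum_count_eq, hcard]
        ring

end MahlerMeasure

section UnivariateEstimate

open Polynomial

theorem abs_coeff_le_two_pow_mul_mapMahlerMeasure (q : ℝ[X]) (k : ℕ) :
    |q.coeff k| ≤ 2 ^ q.natDegree * q.mapMahlerMeasure Complex.ofRealHom :=
  (q.norm_coeff_le_choose_mul_mapMahlerMeasure _ Complex.isometry_ofReal k).trans <| by
    gcongr
    · exact q.mapMahlerMeasure_nonneg _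
    · exact mod_cast Nat.choose_le_two_pow _ _

theorem integral_inv_one_add_eval_div_sq_le {q : ℝ[X]} (hq : q.natDegree ≠ 0) {ε : ℝ}
    (hε : 0 < ε) :
    ∫ x, (1 + (q.eval x / (ε ^ q.natDegree * q.mapMahlerMeasure Complex.ofRealHom)) ^ 2)⁻¹
      ∂gaussianReal 0 1 ≤ 8 * q.natDegree * ε := by
  have hdeg := natDegree_map_eq_of_injective (f := Complex.ofRealHom) Complex.ofReal_injective q
  have hnorm (x : ℝ) : ‖(q.map Complex.ofRealHom).eval (x : ℂ)‖ = |q.eval x| := by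
    rw [← Complex.ofRealHom_eq_coe, eval_map_apply, Complex.ofRealHom_eq_coe, Complex.norm_real,
      Real.norm_eq_abs]
  have := integral_inv_one_add_norm_eval_div_sq_le (hdeg ▸ hq) hε
  simpa only [hnorm, hdeg, div_pow, sq_abs, mapMahlerMeasure] using this

/-- The constant in the estimate `sigmaBound_eval` for one-variable polynomials of degree at
most `m`. -/
noncomputable def univariateConst (m : ℕ) : ℝ := (3 * m + 2) * 2 ^ m + 8 * m

theorem four_le_univariateConst {m : ℕ} (hm : 1 ≤ m) : 4 ≤ univariateConst m := by
  have hm' : (1 : ℝ) ≤ m := mod_cast hm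
  have hpow : (1 : ℝ) ≤ 2 ^ m := one_le_pow₀ one_le_two
  unfold univariateConst
  nlinarith

variable {p : ℝ[X]} {m k : ℕ} {s : ℝ}

theorem sigmaBound_eval_of_natDegree_derivative_eq_zero (hp : p.derivative.natDegree = 0)
    (hk : k ≠ 0) (hc : p.coeff k ≠ 0) (hm : 1 ≤ m) (hs : 0 < s) (hs1 : s ≤ 1) :
    SigmaBound (fun x => p.eval x) (gaussianReal 0 1) (|p.coeff k| * s ^ m)
      (univariateConst m * s) := fun φ hφ => by
  obtain ⟨j, rfl⟩ := Nat.exists_eq_succ_of_ne_zero hk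
  have hj : p.derivative.coeff j ≠ 0 := by
    rw [coeff_derivative]
    exact mul_ne_zero hc (by positivity)
  obtain rfl : j = 0 := Nat.le_zero.1 (hp ▸ le_natDegree_of_ne_zero hj)
  have hderiv : p.derivative = C (p.coeff 1) := by
    rw [eq_C_of_natDegree_eq_zero hp, coeff_derivative]
    simp
  refine (hφ.abs_integral_comp_eval_le_of_derivative_eq_C hderiv hc).trans ?_
  calc 4 * (|p.coeff 1| * s ^ m) / |p.coeff 1| = 4 * s ^ m := by
        have := abs_ne_zero.2 hc
        field_simp
    _ ≤ univariateConst m * s :=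
        mul_le_mul (four_le_univariateConst hm) (pow_le_of_le_one hs.le hs1 (by lia))
          (by positivity) (zero_le_four.trans (four_le_univariateConst hm))

theorem sigmaBound_eval_of_natDegree_derivative_ne_zero (hp : p.derivative.natDegree ≠ 0)
    (hpm : p.natDegree ≤ m) (hk : k ≠ 0) (hs : 0 < s) (hs1 : s ≤ 1) :
    SigmaBound (fun x => p.eval x) (gaussianReal 0 1) (|p.coeff k| * s ^ m)
      (univariateConst m * s) := fun φ hφ => by
  obtain ⟨j, rfl⟩ := Nat.exists_eq_succ_of_ne_zero hk
  set r := p.derivative.natDegree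
  set M := p.derivative.mapMahlerMeasure Complex.ofRealHom
  have hM : 0 < M := mapMahlerMeasure_pos_of_ne_zero _ Complex.isometry_ofReal
    fun h => hp (by simp only [r, h, natDegree_zero])
  have hrm : r + 1 ≤ m := by
    have := natDegree_derivative_le p
    lia
  have hcoeff : |p.coeff (j + 1)| ≤ 2 ^ r * M := by
    refine le_trans ?_ (abs_coeff_le_two_pow_mul_mapMahlerMeasure p.derivative j)
    rw [coeff_derivative, abs_mul, abs_of_pos (by positivity : (0 : ℝ) < j + 1)]
    exact le_mul_of_one_le_right (abs_nonneg _) (by simp)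
  have hscale : |p.coeff (j + 1)| * s ^ m / (s ^ r * M) ≤ 2 ^ m * s := by
    rw [div_le_iff₀ (by positivity)]
    calc |p.coeff (j + 1)| * s ^ m ≤ 2 ^ m * M * s ^ (r + 1) := by
          gcongr ?_ * ?_
          · grw [hcoeff]
            gcongr
            · exact one_le_two
            · lia
          · exact pow_le_pow_of_le_one hs.le hs1 hrm
      _ = 2 ^ m * s * (s ^ r * M) := by ring
  calc _ ≤ (3 * p.natDegree + 2) * (|p.coeff (j + 1)| * s ^ m) / (s ^ r * M) + 8 * r * s :=
        (hφ.abs_integral_comp_eval_le p (by positivity)).trans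
          (add_le_add_right (integral_inv_one_add_eval_div_sq_le hp hs) _)
    _ ≤ (3 * m + 2) * (2 ^ m * s) + 8 * m * s := by
        rw [mul_div_assoc]
        gcongr
        lia
    _ = univariateConst m * s := by rw [univariateConst]; ring

theorem sigmaBound_eval (hpm : p.natDegree ≤ m) (hk : k ≠ 0) (hc : p.coeff k ≠ 0) (hs : 0 < s) :
    SigmaBound (fun x => p.eval x) (gaussianReal 0 1) (|p.coeff k| * s ^ m)
      (univariateConst m * s) := by
  have hm : 1 ≤ m := (Nat.one_le_iff_ne_zero.2 hk).trans ((le_natDegree_of_ne_zero hc).trans hpm)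
  rcases le_or_gt s 1 with hs1 | hs1
  · by_cases hp : p.derivative.natDegree = 0
    · exact sigmaBound_eval_of_natDegree_derivative_eq_zero hp hk hc hm hs hs1
    · exact sigmaBound_eval_of_natDegree_derivative_ne_zero hp hpm hk hs hs1
  · exact sigmaBound_one.mono le_rfl (by nlinarith [four_le_univariateConst hm])

end UnivariateEstimate

section Resampling

variable {ι : Type*} [Fintype ι] [DecidableEq ι] {Ω : ι → Type*} [∀ i, MeasurableSpace (Ω i)]
  (μ : ∀ i, Measure (Ω i)) [∀ i, IsProbabilityMeasure (μ i)]

theorem measurePreserving_update_pi (i : ι) :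
    MeasurePreserving (fun z : (∀ l, Ω l) × Ω i => Function.update z.1 i z.2)
      ((Measure.pi μ).prod (μ i)) (Measure.pi μ) := by
  have hmeas : Measurable fun z : (∀ l, Ω l) × Ω i => Function.update z.1 i z.2 :=
    measurable_update'
  refine ⟨hmeas, (Measure.pi_eq fun s hs => ?_).symm⟩
  have hpre : (fun z : (∀ l, Ω l) × Ω i => Function.update z.1 i z.2) ⁻¹' Set.univ.pi s =
      Set.univ.pi (Function.update s i Set.univ) ×ˢ s i := by
    ext ⟨x, y⟩
    simp only [Set.mem_preimage, Set.mem_univ_pi, Set.mem_prod]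
    constructor
    · refine fun h => ⟨fun l => ?_, by simpa using h i⟩
      rcases eq_or_ne l i with rfl | hl
      · simp
      · simpa [hl] using h l
    · rintro ⟨hx, hy⟩ l
      rcases eq_or_ne l i with rfl | hl
      · simpa using hy
      · simpa [hl] using hx l
  rw [Measure.map_apply hmeas (.univ_pi hs), hpre, Measure.prod_prod, Measure.pi_pi,
    ← Finset.mul_prod_erase _ _ (Finset.mem_univ i), ← Finset.mul_prod_erase _ (fun l => μ l (s l))
      (Finset.mem_univ i), Function.update_self, measure_univ, one_mul, mul_comm]
  congr 1
  exact Finset.prod_congr rfl fun l hl => by rw [Function.update_of_ne (Finset.ne_of_mem_erase hl)]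

variable {μ} {E : Type*} [NormedAddCommGroup E] {F : (∀ l, Ω l) → E}

theorem integrable_comp_update_pi (hF : Integrable F (Measure.pi μ)) (i : ι) :
    Integrable (fun z : (∀ l, Ω l) × Ω i => F (Function.update z.1 i z.2))
      ((Measure.pi μ).prod (μ i)) :=
  (measurePreserving_update_pi μ i).integrable_comp_of_integrable hF

theorem integral_pi_eq_integral_integral_update [NormedSpace ℝ E]
    (hF : Integrable F (Measure.pi μ)) (i : ι) :
    ∫ x, F x ∂Measure.pi μ = ∫ x, ∫ y, F (Function.update x i y) ∂μ i ∂Measure.pi μ := by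
  have hmp := measurePreserving_update_pi μ i
  rw [← integral_prod _ (integrable_comp_update_pi hF i), ← integral_map hmp.measurable.aemeasurable
    (hmp.map_eq.symm ▸ hF.aestronglyMeasurable), hmp.map_eq]

end Resampling

section PolynomialInOneVariable

open MvPolynomial

variable {ι R : Type*} [DecidableEq ι] [CommSemiring R]

/-- A multivariate polynomial regarded as a polynomial in the `i`-th variable. Its coefficients
are kept in the same ring `MvPolynomial ι R`, although the `i`-th variable does not occur in
them. -/
noncomputable def toPolynomialIn (i : ι) : MvPolynomial ι R →ₐ[R] Polynomial (MvPolynomial ι R) :=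
  aeval (Function.update (fun l => Polynomial.C (X l)) i Polynomial.X)

theorem toPolynomialIn_X_self (i : ι) :
    toPolynomialIn i (X i : MvPolynomial ι R) = Polynomial.X := by
  simp [toPolynomialIn]

theorem toPolynomialIn_X_of_ne {i l : ι} (h : l ≠ i) :
    toPolynomialIn i (X l : MvPolynomial ι R) = Polynomial.C (X l) := by
  simp [toPolynomialIn, h]

theorem eval_map_toPolynomialIn (i : ι) (x : ι → R) (f : MvPolynomial ι R) (y : R) :
    ((toPolynomialIn i f).map (eval x)).eval y = eval (Function.update x i y) f := by
  induction f using MvPolynomial.induction_on with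
  | C a => simp
  | add p q hp hq => simp [hp, hq]
  | mul_X p l hp =>
    rcases eq_or_ne l i with rfl | hl
    · simp [hp, toPolynomialIn_X_self]
    · simp [hp, toPolynomialIn_X_of_ne hl, hl]

theorem derivative_toPolynomialIn (i : ι) (f : MvPolynomial ι R) :
    (toPolynomialIn i f).derivative = toPolynomialIn i (pderiv i f) := by
  induction f using MvPolynomial.induction_on with
  | C a => simp
  | add p q hp hq => simp [hp, hq]
  | mul_X p l hp =>
    rcases eq_or_ne l i with rfl | hl
    · simp [hp, toPolynomialIn_X_self, mul_comm]
    · simp [hp, toPolynomialIn_X_of_ne hl, pderiv_X_of_ne hl, mul_comm]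

theorem toPolynomialIn_monomial_of_apply_eq_zero {i : ι} {e : ι →₀ ℕ} (he : e i = 0) (a : R) :
    toPolynomialIn i (monomial e a) = Polynomial.C (monomial e a) := by
  have hne (l : ι) (hl : l ∈ e.support) : l ≠ i := fun h => Finsupp.mem_support_iff.1 hl (h ▸ he)
  rw [monomial_eq, map_mul, map_mul, map_finsuppProd, map_finsuppProd]
  congr 1
  · exact (toPolynomialIn i).commutes a
  · exact Finsupp.prod_congr fun l hl => by
      rw [map_pow, map_pow, toPolynomialIn_X_of_ne (hne l hl)]

theorem toPolynomialIn_monomial (i : ι) (e : ι →₀ ℕ) (a : R) :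
    toPolynomialIn i (monomial e a) = Polynomial.monomial (e i) (monomial (e.erase i) a) := by
  conv_lhs => rw [← Finsupp.single_add_erase i e, monomial_single_add, map_mul, map_pow,
    toPolynomialIn_X_self, toPolynomialIn_monomial_of_apply_eq_zero Finsupp.erase_same]
  rw [mul_comm, Polynomial.C_mul_X_pow_eq_monomial]

theorem coeff_coeff_toPolynomialIn (i : ι) (f : MvPolynomial ι R) (k : ℕ) (e : ι →₀ ℕ) :
    coeff e ((toPolynomialIn i f).coeff k) =
      if e i = 0 then coeff (e + Finsupp.single i k) f else 0 := by
  induction f using MvPolynomial.induction_on' with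
  | add p q hp hq =>
    simp only [map_add, Polynomial.coeff_add, coeff_add, hp, hq, ite_add_ite, add_zero]
  | monomial e' a =>
    have hiff : e' i = k ∧ e'.erase i = e ↔ e i = 0 ∧ e' = e + Finsupp.single i k := by
      constructor
      · rintro ⟨rfl, rfl⟩
        exact ⟨Finsupp.erase_same, (Finsupp.erase_add_single i e').symm⟩
      · rintro ⟨he, rfl⟩
        refine ⟨by simp [he], ?_⟩
        rw [Finsupp.erase_add, Finsupp.erase_single, add_zero,
          Finsupp.erase_of_notMem_support (by simpa using he)]
    rw [toPolynomialIn_monomial, Polynomial.coeff_monomial, apply_ite (coeff e), coeff_monomial,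
      coeff_zero, coeff_monomial, ← ite_and, ← ite_and]
    exact if_congr hiff rfl rfl

theorem natDegree_toPolynomialIn_le (i : ι) (f : MvPolynomial ι R) :
    (toPolynomialIn i f).natDegree ≤ degreeOf i f := by
  refine Polynomial.natDegree_le_iff_coeff_eq_zero.2 fun k hk => ?_
  ext e
  rw [coeff_coeff_toPolynomialIn, coeff_zero, ite_eq_right_iff]
  refine fun _ => notMem_support_iff.1 fun hmem => hk.not_ge ?_
  exact (by simp : k ≤ (e + Finsupp.single i k) i).trans (monomial_le_degreeOf i hmem)

end PolynomialInOneVariable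

section TopMonomial

open MvPolynomial

variable {ι : Type*} {m D : ℕ} {f : MvPolynomial ι ℝ}

/-- The class of polynomials on which the induction runs: the total degree is at most `D`, every
exponent is at most `m`, and some monomial of degree exactly `D` has a coefficient of absolute
value at least one. Unlike the normalization `a[f] = 1`, this is inherited by partial
derivatives and by the coefficients of the powers of a single variable. -/
structure HasTopMonomial (m D : ℕ) (f : MvPolynomial ι ℝ) : Prop where
  degree_le : ∀ e ∈ f.support, e.degree ≤ D
  degreeOf_le : ∀ i, f.degreeOf i ≤ m
  exists_coeff : ∃ j : ι →₀ ℕ, j.degree = D ∧ 1 ≤ |coeff j f|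

theorem mem_support_of_one_le_abs_coeff {j : ι →₀ ℕ} (hj : 1 ≤ |coeff j f|) : j ∈ f.support :=
  mem_support_iff.2 (abs_pos.1 (one_pos.trans_le hj))

theorem HasTopMonomial.eq_C (hf : HasTopMonomial m 0 f) : f = C (coeff 0 f) :=
  totalDegree_eq_zero_iff_eq_C.1 (Nat.le_zero.1 (Finset.sup_le hf.degree_le))

theorem HasTopMonomial.one_le_abs_coeff_zero (hf : HasTopMonomial m 0 f) : 1 ≤ |coeff 0 f| := by
  obtain ⟨j, hj, hcoeff⟩ := hf.exists_coeff
  rwa [(Finsupp.degree_eq_zero_iff j).1 hj] at hcoeff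

theorem HasTopMonomial.exists_pderiv (hf : HasTopMonomial m (D + 1) f) :
    ∃ i, HasTopMonomial m D (pderiv i f) := by
  obtain ⟨j, hj, hcoeff⟩ := hf.exists_coeff
  obtain ⟨i, hi⟩ : ∃ i, j i ≠ 0 :=
    DFunLike.ne_iff.1 (mt (Finsupp.degree_eq_zero_iff j).2 (hj.trans_ne D.succ_ne_zero))
  have hadd : j - Finsupp.single i 1 + Finsupp.single i 1 = j :=
    tsub_add_cancel_of_le (Finsupp.single_le_iff.2 (Nat.one_le_iff_ne_zero.2 hi))
  have hsupp (e : ι →₀ ℕ) (he : e ∈ (pderiv i f).support) : e + Finsupp.single i 1 ∈ f.support := by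
    rw [mem_support_iff, coeff_pderiv] at he
    exact mem_support_iff.2 (left_ne_zero_of_mul he)
  refine ⟨i, fun e he => ?_, fun l => degreeOf_le_iff.2 fun e he => ?_,
    j - Finsupp.single i 1, ?_, ?_⟩
  · simpa using hf.degree_le _ (hsupp e he)
  · have := (monomial_le_degreeOf l (hsupp e he)).trans (hf.degreeOf_le l)
    exact (Nat.le_add_right _ _).trans this
  · rw [← hadd, map_add, Finsupp.degree_single] at hj
    exact Nat.succ_injective hj
  · rw [coeff_pderiv, hadd, abs_mul, abs_of_pos (by positivity : (0 : ℝ) < _ + 1)]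
    exact hcoeff.trans (le_mul_of_one_le_right (abs_nonneg _) (by simp))

theorem HasTopMonomial.exists_coeff_toPolynomialIn [DecidableEq ι] (hf : HasTopMonomial m D f)
    (hD : D ≠ 0) :
    ∃ i k, 1 ≤ k ∧ k ≤ m ∧ HasTopMonomial m (D - k) ((toPolynomialIn i f).coeff k) := by
  obtain ⟨j, rfl, hcoeff⟩ := hf.exists_coeff
  obtain ⟨i, hi⟩ : ∃ i, j i ≠ 0 :=
    DFunLike.ne_iff.1 (mt (Finsupp.degree_eq_zero_iff j).2 hD)
  have hdegree : (j.erase i).degree + j i = j.degree := by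
    conv_rhs => rw [← Finsupp.erase_add_single i j, map_add, Finsupp.degree_single]
  have hsupp (e : ι →₀ ℕ) (he : e ∈ ((toPolynomialIn i f).coeff (j i)).support) :
      e + Finsupp.single i (j i) ∈ f.support := by
    rw [mem_support_iff, coeff_coeff_toPolynomialIn] at he
    exact mem_support_iff.2 (ite_ne_right_iff.1 he).2
  refine ⟨i, j i, Nat.one_le_iff_ne_zero.2 hi,
    (monomial_le_degreeOf i (mem_support_of_one_le_abs_coeff hcoeff)).trans (hf.degreeOf_le i),
    fun e he => ?_, fun l => degreeOf_le_iff.2 fun e he => ?_, j.erase i, by lia, ?_⟩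
  · have := hf.degree_le _ (hsupp e he)
    rw [map_add, Finsupp.degree_single] at this
    lia
  · have := (monomial_le_degreeOf l (hsupp e he)).trans (hf.degreeOf_le l)
    exact (Nat.le_add_right _ _).trans this
  · rwa [coeff_coeff_toPolynomialIn, if_pos Finsupp.erase_same, Finsupp.erase_add_single]

theorem exists_topCoeff_eq_abs_coeff {n : ℕ} {f : MvPolynomial (Fin n) ℝ} (hf : topCoeff f ≠ 0) :
    ∃ j : Fin n →₀ ℕ, j.degree = f.totalDegree ∧ topCoeff f = |coeff j f| := by
  change topCoeff f ∈ {c : ℝ | ∃ j : Fin n →₀ ℕ, j.degree = f.totalDegree ∧ c = |coeff j f|}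
  refine Set.Nonempty.csSup_mem (Set.nonempty_iff_ne_empty.2 fun h => hf ?_) ?_
  · exact (congrArg sSup h).trans Real.sSup_empty
  · refine ((f.support.finite_toSet.image fun j => |coeff j f|).insert 0).subset ?_
    rintro _ ⟨j, -, rfl⟩
    by_cases hj : j ∈ f.support
    · exact .inr ⟨j, hj, rfl⟩
    · exact .inl (by rw [notMem_support_iff.1 hj, abs_zero])

theorem hasTopMonomial_of_one_le_topCoeff {n : ℕ} {f : MvPolynomial (Fin n) ℝ}
    (hm : ∀ i, f.degreeOf i ≤ m) (hf : 1 ≤ topCoeff f) : HasTopMonomial m f.totalDegree f := by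
  obtain ⟨j, hj, hcoeff⟩ := exists_topCoeff_eq_abs_coeff (one_pos.trans_le hf).ne'
  exact ⟨fun _ => le_totalDegree, hm, j, hj, hf.trans_eq hcoeff⟩

end TopMonomial

section SeveralVariables

open MvPolynomial

/-- The standard Gaussian measure on `ι → ℝ`, for an arbitrary finite index type; `stdGaussian n`
is the case `ι = Fin n`. -/
noncomputable abbrev gaussianPi (ι : Type*) [Fintype ι] : Measure (ι → ℝ) :=
  Measure.pi fun _ => gaussianReal 0 1

variable {ι : Type*} [Fintype ι] {f : MvPolynomial ι ℝ} {φ : ℝ → ℝ} {m D : ℕ} {t s : ℝ}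

theorem IsTestFunction.integrable_deriv_comp_eval (hφ : IsTestFunction t φ)
    (f : MvPolynomial ι ℝ) : Integrable (fun x => deriv φ (eval x f)) (gaussianPi ι) :=
  hφ.integrable_deriv_comp f.continuous_eval.aemeasurable

section

variable [DecidableEq ι]

theorem abs_integral_gaussianPi_le {F : (ι → ℝ) → ℝ} (hF : Integrable F (gaussianPi ι)) (i : ι) :
    |∫ x, F x ∂gaussianPi ι| ≤
      ∫ x, |∫ y, F (Function.update x i y) ∂gaussianReal 0 1| ∂gaussianPi ι := by
  rw [integral_pi_eq_integral_integral_update hF i]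
  exact abs_integral_le_integral_abs

theorem IsTestFunction.abs_integral_le_of_forall_update (hφ : IsTestFunction t φ) {i : ι}
    {G : (ι → ℝ) → ℝ} (hG : Integrable G (gaussianPi ι))
    (h : ∀ x, |∫ y, deriv φ (eval (Function.update x i y) f) ∂gaussianReal 0 1| ≤ G x) :
    |∫ x, deriv φ (eval x f) ∂gaussianPi ι| ≤ ∫ x, G x ∂gaussianPi ι :=
  (abs_integral_gaussianPi_le (hφ.integrable_deriv_comp_eval f) i).trans <| integral_mono
    (integrable_comp_update_pi (hφ.integrable_deriv_comp_eval f) i).integral_prod_left.abs hG h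

end

theorem IsTestFunction.abs_integral_comp_eval_le_of_degreeOf_le (hφ : IsTestFunction t φ) {i : ι}
    (hf : f.degreeOf i ≤ m) {δ : ℝ} (hδ : 0 < δ) :
    |∫ x, deriv φ (eval x f) ∂gaussianPi ι| ≤ (3 * m + 2) * t / δ +
      ∫ x, (1 + (eval x (pderiv i f) / δ) ^ 2)⁻¹ ∂gaussianPi ι := by
  classical
  have ht : 0 ≤ t := (abs_nonneg _).trans (hφ.abs_le 0)
  have hlor : Integrable (fun x => (1 + (eval x (pderiv i f) / δ) ^ 2)⁻¹) (gaussianPi ι) :=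
    integrable_inv_one_add_comp_sq (X := fun x => eval x (pderiv i f) / δ)
      ((pderiv i f).continuous_eval.aemeasurable.div_const δ)
  have hlor' := (integrable_comp_update_pi hlor i).integral_prod_left
  refine (hφ.abs_integral_le_of_forall_update (i := i)
    ((integrable_const ((3 * m + 2) * t / δ)).add hlor') fun x => ?_).trans_eq ?_
  · have hdeg : ((toPolynomialIn i f).map (eval x)).natDegree ≤ m :=
      Polynomial.natDegree_map_le.trans ((natDegree_toPolynomialIn_le i f).trans hf)
    have := hφ.abs_integral_comp_eval_le ((toPolynomialIn i f).map (eval x)) hδ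
    simp only [Polynomial.derivative_map, derivative_toPolynomialIn, eval_map_toPolynomialIn]
      at this
    refine this.trans (add_le_add_left ?_ _)
    change _ ≤ (3 * (m : ℝ) + 2) * t / δ
    gcongr
  · simp only [Pi.add_apply]
    rw [integral_add (integrable_const _) hlor', integral_pi_eq_integral_integral_update hlor i]
    simp

theorem IsTestFunction.abs_integral_comp_eval_le_of_pderiv_eq_C (hφ : IsTestFunction t φ) {i : ι}
    {c : ℝ} (hf : pderiv i f = C c) (hc : c ≠ 0) :
    |∫ x, deriv φ (eval x f) ∂gaussianPi ι| ≤ 4 * t / |c| := by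
  classical
  refine (hφ.abs_integral_le_of_forall_update (i := i) (integrable_const (4 * t / |c|))
    fun x => ?_).trans_eq (by simp)
  have := hφ.abs_integral_comp_eval_le_of_derivative_eq_C
    (p := (toPolynomialIn i f).map (eval x)) (c := c)
    (by rw [Polynomial.derivative_map, derivative_toPolynomialIn, hf]; simp [toPolynomialIn]) hc
  simpa only [eval_map_toPolynomialIn] using this

theorem HasTopMonomial.sigmaBound_pow_degree (hf : HasTopMonomial m D f) (hD : D ≠ 0)
    (hs : 0 < s) :
    SigmaBound (fun x => eval x f) (gaussianPi ι) (s ^ D) ((6 * m + 4) * D * s) := by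
  induction D generalizing f with
  | zero => exact absurd rfl hD
  | succ D ih =>
    intro φ hφ
    obtain ⟨i, hi⟩ := hf.exists_pderiv
    rcases eq_or_ne D 0 with rfl | hD'
    · have hc := hi.one_le_abs_coeff_zero
      calc _ ≤ 4 * s ^ 1 / |coeff 0 (pderiv i f)| :=
            hφ.abs_integral_comp_eval_le_of_pderiv_eq_C hi.eq_C (abs_pos.1 (one_pos.trans_le hc))
        _ ≤ 4 * s ^ 1 := div_le_self (by positivity) hc
        _ ≤ (6 * m + 4) * (0 + 1 : ℕ) * s := by
            have : 0 ≤ m * s := by positivity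
            push_cast
            linarith
    · have hlor := (ih hi hD').mono (mul_div_cancel₀ _ two_ne_zero).le le_rfl
        |>.integral_inv_one_add_div_sq_le (by positivity)
      calc _ ≤ (3 * m + 2) * s ^ (D + 1) / (s ^ D / 2) + (6 * m + 4) * D * s :=
            (hφ.abs_integral_comp_eval_le_of_degreeOf_le (hf.degreeOf_le i) (by positivity)).trans
              (add_le_add_right hlor _)
        _ = (6 * m + 4) * (D + 1 : ℕ) * s := by
            push_cast
            field_simp
            ring

end SeveralVariables

section SmallBalls

variable {Ω : Type*} {mΩ : MeasurableSpace Ω} {μ : Measure Ω} [IsProbabilityMeasure μ]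

theorem integral_le_add_mul_abs_log {Y : Ω → ℝ} {s A : ℝ} (hY : Integrable Y μ)
    (hY0 : ∀ ω, 0 ≤ Y ω) (hY1 : ∀ ω, Y ω ≤ 1) (hs : 0 < s) (hs1 : s ≤ 1)
    (h : ∀ y, s < y → y < 1 → μ.real {ω | y < Y ω} ≤ A / y) :
    ∫ ω, Y ω ∂μ ≤ s + A * |Real.log s| := by
  have hanti : Antitone fun y => μ.real {ω | y < Y ω} := fun a b hab =>
    measureReal_mono fun ω hω => hab.trans_lt hω
  have hzero : ∀ y ∈ Set.Ioi (0 : ℝ) \ Set.Ioc 0 1, μ.real {ω | y < Y ω} = 0 := fun y hy => by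
    have : {ω | y < Y ω} = ∅ := Set.eq_empty_of_forall_notMem fun ω hω =>
      hy.2 ⟨hy.1, (hω.trans_le (hY1 ω)).le⟩
    rw [this, measureReal_empty]
  calc ∫ ω, Y ω ∂μ = ∫ y in Set.Ioi 0, μ.real {ω | y < Y ω} :=
        hY.integral_eq_integral_meas_lt (.of_forall hY0)
    _ = ∫ y in (0 : ℝ)..1, μ.real {ω | y < Y ω} := by
        rw [intervalIntegral.integral_of_le zero_le_one]
        exact (setIntegral_eq_of_subset_of_forall_sdiff_eq_zero measurableSet_Ioi
          Set.Ioc_subset_Ioi_self hzero)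
    _ = (∫ y in (0 : ℝ)..s, μ.real {ω | y < Y ω}) + ∫ y in s..1, μ.real {ω | y < Y ω} :=
        (intervalIntegral.integral_add_adjacent_intervals hanti.intervalIntegrable
          hanti.intervalIntegrable).symm
    _ ≤ (∫ _ in (0 : ℝ)..s, 1) + ∫ y in s..1, A * y⁻¹ := by
        gcongr
        · exact intervalIntegral.integral_mono hs.le hanti.intervalIntegrable
            intervalIntegrable_const fun y => measureReal_le_one
        · exact intervalIntegral.integral_mono_on_of_le_Ioo hs1 hanti.intervalIntegrable
            ((intervalIntegral.intervalIntegrable_inv (fun y hy => by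
              rw [Set.uIcc_of_le hs1] at hy
              exact (hs.trans_le hy.1).ne') continuousOn_id).const_mul A)
            fun y hy => (h y hy.1 hy.2).trans_eq (div_eq_mul_inv _ _)
    _ = s + A * |Real.log s| := by
        rw [intervalIntegral.integral_const_mul, integral_inv_of_pos hs one_pos,
          abs_of_nonpos (Real.log_nonpos hs.le hs1), one_div, Real.log_inv]
        simp

theorem SigmaBound.measureReal_abs_le_pow_le {X : Ω → ℝ} {m : ℕ} {s A r : ℝ}
    (h : ∀ r, s ≤ r → r ≤ 1 → SigmaBound X μ (r ^ m) (A * r)) (hX : AEMeasurable X μ)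
    (hm : m ≠ 0) (hA : 0 ≤ A) (hs : 0 < s) (hr : s ≤ r) :
    μ.real {ω | |X ω| ≤ r ^ m} ≤ (4 * A + 2) * r := by
  have hr0 : 0 < r := hs.trans_le hr
  rcases le_or_gt (2 * r) 1 with hr1 | hr1
  · have hpow : 2 * r ^ m ≤ (2 * r) ^ m := by
      rw [mul_pow]
      gcongr
      exact le_self_pow₀ one_le_two hm
    calc μ.real {ω | |X ω| ≤ r ^ m} ≤ 2 * (A * (2 * r)) :=
          ((h (2 * r) (by linarith) hr1).mono hpow le_rfl).measureReal_abs_le_le (by positivity) hX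
      _ ≤ (4 * A + 2) * r := by linarith
  · calc μ.real {ω | |X ω| ≤ r ^ m} ≤ 1 := measureReal_le_one
      _ ≤ (4 * A + 2) * r := by nlinarith

end SmallBalls

section LogarithmicStep

open MvPolynomial

theorem abs_log_le_abs_log_of_le_one {s r : ℝ} (hs : 0 < s) (hsr : s ≤ r) (hr : r ≤ 1) :
    |Real.log r| ≤ |Real.log s| := by
  rw [abs_of_nonpos (Real.log_nonpos (hs.trans_le hsr).le hr),
    abs_of_nonpos (Real.log_nonpos hs.le (hsr.trans hr))]
  exact neg_le_neg (Real.log_le_log hs hsr)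

section

variable {ι : Type*} [DecidableEq ι] {f : MvPolynomial ι ℝ} {i : ι} {m k : ℕ} {s : ℝ}

theorem IsTestFunction.abs_integral_update_le {φ : ℝ → ℝ} (hφ : IsTestFunction (s ^ m) φ)
    (hf : f.degreeOf i ≤ m) (hk : k ≠ 0) (hs : 0 < s) (hm : 1 ≤ m) {y : ℝ} (hy : 0 < y)
    {x : ι → ℝ}
    (hx : (univariateConst m * s / y) ^ m < |eval x ((toPolynomialIn i f).coeff k)|) :
    |∫ z, deriv φ (eval (Function.update x i z) f) ∂gaussianReal 0 1| ≤ y := by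
  have hK : 0 < univariateConst m := zero_lt_four.trans_le (four_le_univariateConst hm)
  set p := (toPolynomialIn i f).map (eval x) with hp
  have hcoeff : p.coeff k = eval x ((toPolynomialIn i f).coeff k) := Polynomial.coeff_map ..
  have hdeg : p.natDegree ≤ m :=
    Polynomial.natDegree_map_le.trans ((natDegree_toPolynomialIn_le i f).trans hf)
  have hlevel : s ^ m ≤ |p.coeff k| * (y / univariateConst m) ^ m :=
    calc s ^ m = (univariateConst m * s / y) ^ m * (y / univariateConst m) ^ m := by
          rw [← mul_pow]
          field_simp
      _ ≤ |p.coeff k| * (y / univariateConst m) ^ m := by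
          rw [hcoeff]
          gcongr
  have hc : p.coeff k ≠ 0 := hcoeff ▸ abs_pos.1 (lt_of_le_of_lt (by positivity) hx)
  have := sigmaBound_eval hdeg hk hc (div_pos hy hK) φ (hφ.mono hlevel)
  simpa only [hp, eval_map_toPolynomialIn, mul_div_cancel₀ _ hK.ne'] using this

theorem SigmaBound.eval_of_coeff_toPolynomialIn [Fintype ι] (hf : f.degreeOf i ≤ m) (hk : k ≠ 0)
    (hm : 1 ≤ m) (hs : 0 < s) (hs1 : s ≤ 1) {A : ℝ} (hA : 0 ≤ A)
    (h : ∀ r, s ≤ r → r ≤ 1 →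
      SigmaBound (fun x => eval x ((toPolynomialIn i f).coeff k)) (gaussianPi ι) (r ^ m) (A * r)) :
    SigmaBound (fun x => eval x f) (gaussianPi ι) (s ^ m)
      ((1 + (4 * A + 2) * univariateConst m * |Real.log s|) * s) := fun φ hφ => by
  set K := univariateConst m
  have hK : 4 ≤ K := four_le_univariateConst hm
  have hint := hφ.integrable_deriv_comp_eval f
  refine (abs_integral_gaussianPi_le hint i).trans ?_
  refine (integral_le_add_mul_abs_log (A := (4 * A + 2) * (K * s))
    (integrable_comp_update_pi hint i).integral_prod_left.abs (fun _ => abs_nonneg _)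
    (fun x => ?_) hs hs1 fun y hsy hy1 => ?_).trans_eq (by ring)
  · exact sigmaBound_one φ hφ
  · have hy : 0 < y := hs.trans hsy
    have hsub : {x | y < |∫ z, deriv φ (eval (Function.update x i z) f) ∂gaussianReal 0 1|} ⊆
        {x | |eval x ((toPolynomialIn i f).coeff k)| ≤ (K * s / y) ^ m} := fun x hx =>
      not_lt.1 fun hlt => hx.not_ge (hφ.abs_integral_update_le hf hk hs hm hy hlt)
    calc _ ≤ (4 * A + 2) * (K * s / y) := (measureReal_mono hsub).trans <|
          SigmaBound.measureReal_abs_le_pow_le h (continuous_eval _).aemeasurable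
            (Nat.one_le_iff_ne_zero.1 hm) hA hs
            ((le_div_iff₀ hy).2 (by nlinarith))
      _ = (4 * A + 2) * (K * s) / y := (mul_div_assoc _ _ _).symm

end

theorem HasTopMonomial.sigmaBound_pow {ι : Type*} [Fintype ι] {f : MvPolynomial ι ℝ} {m D : ℕ}
    (hf : HasTopMonomial m D f) (hD : D ≠ 0) (hm : 1 ≤ m) {s : ℝ} (hs : 0 < s) (hs1 : s ≤ 1) :
    SigmaBound (fun x => eval x f) (gaussianPi ι) (s ^ m)
      ((6 * m + 4) * m * (6 * univariateConst m * (1 + |Real.log s|)) ^ (D - m) * s) := by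
  classical
  induction D using Nat.strong_induction_on generalizing f s with
  | _ D ih =>
    rcases le_or_gt D m with hDm | hDm
    · rw [Nat.sub_eq_zero_of_le hDm, pow_zero, mul_one]
      exact (hf.sigmaBound_pow_degree hD hs).mono (pow_le_pow_of_le_one hs.le hs1 hDm) (by gcongr)
    obtain ⟨i, k, hk, hkm, hg⟩ := hf.exists_coeff_toPolynomialIn hD
    set K := univariateConst m
    set L := |Real.log s|
    have hK : 4 ≤ K := four_le_univariateConst hm
    have hL0 : 0 ≤ L := abs_nonneg _
    have hm' : (1 : ℝ) ≤ m := mod_cast hm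
    have hbase : 1 ≤ 6 * K * (1 + L) := by nlinarith
    let A := (6 * m + 4) * m * (6 * K * (1 + L)) ^ (D - m - 1)
    have hA : 1 ≤ A := one_le_mul_of_one_le_of_one_le (by nlinarith) (one_le_pow₀ hbase)
    have hcoeff (r : ℝ) (hsr : s ≤ r) (hr1 : r ≤ 1) : SigmaBound
        (fun x => eval x ((toPolynomialIn i f).coeff k)) (gaussianPi ι) (r ^ m) (A * r) := by
      have hr0 : 0 < r := hs.trans_le hsr
      have hlog : |Real.log r| ≤ L := abs_log_le_abs_log_of_le_one hs hsr hr1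
      refine (ih (D - k) (by lia) hg (by lia) hr0 hr1).mono le_rfl <|
        mul_le_mul_of_nonneg_right (mul_le_mul_of_nonneg_left ?_ (by positivity)) hr0.le
      calc _ ≤ (6 * K * (1 + L)) ^ (D - k - m) := by gcongr
        _ ≤ (6 * K * (1 + L)) ^ (D - m - 1) := pow_le_pow_right₀ hbase (by lia)
    refine (SigmaBound.eval_of_coeff_toPolynomialIn (hf.degreeOf_le i)
      (Nat.one_le_iff_ne_zero.1 hk) hm hs hs1 (by positivity) hcoeff).mono le_rfl ?_
    calc (1 + (4 * A + 2) * K * L) * s ≤ A * (6 * K * (1 + L)) * s := by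
          gcongr
          have hKA : K ≤ A * K := le_mul_of_one_le_left (by positivity) hA
          linarith [mul_le_mul_of_nonneg_right hKA hL0]
      _ = _ := by rw [mul_assoc _ _ (6 * K * (1 + L)), ← pow_succ, Nat.sub_add_cancel (by lia)]

end LogarithmicStep

section Conclusion

open Filter Topology

/-- The constant `C(m, d)` of `sigma_bound_normalized`. -/
noncomputable def sigmaBoundConst (m d : ℕ) : ℝ :=
  (6 * m + 4) * m * (12 * univariateConst m) ^ (d - m)

theorem one_le_sigmaBoundConst {m : ℕ} (hm : 1 ≤ m) (d : ℕ) : 1 ≤ sigmaBoundConst m d := by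
  have hm' : (1 : ℝ) ≤ m := mod_cast hm
  exact one_le_mul_of_one_le_of_one_le (by nlinarith)
    (one_le_pow₀ (by linarith [four_le_univariateConst hm]))

theorem mul_one_add_pow_le {a x : ℝ} (ha : 0 ≤ a) (hx : 0 ≤ x) (e : ℕ) :
    (a * (1 + x)) ^ e ≤ (2 * a) ^ e * (x ^ e + 1) :=
  calc (a * (1 + x)) ^ e = a ^ e * (x + 1) ^ e := by rw [mul_pow, add_comm]
    _ ≤ a ^ e * (2 ^ (e - 1) * (x ^ e + 1 ^ e)) := by
        gcongr
        exact add_pow_le hx zero_le_one e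
    _ ≤ a ^ e * (2 ^ e * (x ^ e + 1)) := by
        rw [one_pow]
        gcongr
        · exact one_le_two
        · exact e.sub_le 1
    _ = (2 * a) ^ e * (x ^ e + 1) := by ring

theorem HasTopMonomial.sigmaBound {ι : Type*} [Fintype ι] {f : MvPolynomial ι ℝ} {m d D : ℕ}
    (hf : HasTopMonomial m D f) (hD : D ≠ 0) (hDd : D ≤ d) (hm : 1 ≤ m) {t : ℝ} (ht : 0 < t) :
    SigmaBound (fun x => MvPolynomial.eval x f) (gaussianPi ι) t
      (sigmaBoundConst m d * t ^ ((1 : ℝ) / m) * (|Real.log t| ^ (d - m) + 1)) := by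
  have hK := four_le_univariateConst hm
  rcases le_or_gt t 1 with ht1 | ht1
  · have hlevel : t = (t ^ ((1 : ℝ) / m)) ^ m := by
      rw [one_div, Real.rpow_inv_natCast_pow ht.le (Nat.one_le_iff_ne_zero.1 hm)]
    have hlog : |Real.log (t ^ ((1 : ℝ) / m))| ≤ |Real.log t| := by
      rw [Real.log_rpow ht, abs_mul, abs_of_nonneg (by positivity)]
      exact mul_le_of_le_one_left (abs_nonneg _)
        (div_le_one_of_le₀ (mod_cast hm) (Nat.cast_nonneg m))
    have hs : 0 < t ^ ((1 : ℝ) / m) := Real.rpow_pos_of_pos ht _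
    refine (hf.sigmaBound_pow hD hm hs
      (Real.rpow_le_one ht.le ht1 (by positivity))).mono hlevel.le ?_
    generalize t ^ ((1 : ℝ) / m) = s at *
    calc _ ≤ (6 * m + 4) * m * (6 * univariateConst m * (1 + |Real.log t|)) ^ (d - m) * s := by
          gcongr _ * ?_ * _
          calc _ ≤ (6 * univariateConst m * (1 + |Real.log t|)) ^ (D - m) := by gcongr
            _ ≤ _ := pow_le_pow_right₀ (by nlinarith [abs_nonneg (Real.log t)]) (by lia)
      _ ≤ (6 * m + 4) * m *
            ((2 * (6 * univariateConst m)) ^ (d - m) * (|Real.log t| ^ (d - m) + 1)) * s := by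
          gcongr
          exact mul_one_add_pow_le (by positivity) (abs_nonneg _) _
      _ = _ := by
          rw [sigmaBoundConst]
          ring
  · refine sigmaBound_one.mono le_rfl ?_
    exact one_le_mul_of_one_le_of_one_le (one_le_mul_of_one_le_of_one_le
      (one_le_sigmaBoundConst hm d) (Real.one_le_rpow ht1.le (by positivity)))
      (le_add_of_nonneg_left (by positivity))

theorem tendsto_mul_rpow_mul_abs_log_pow_add_one (C : ℝ) {a : ℝ} (ha : 0 < a) (e : ℕ) :
    Tendsto (fun t => C * t ^ a * (|Real.log t| ^ e + 1)) (𝓝[>] 0) (𝓝 0) := by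
  have hpow : Tendsto (fun t : ℝ => t ^ a) (𝓝[>] 0) (𝓝 0) := by
    simpa [Real.zero_rpow ha.ne'] using
      ((Real.continuousAt_rpow_const 0 a (.inr ha.le)).tendsto).mono_left nhdsWithin_le_nhds
  have hlog : Tendsto (fun t : ℝ => |Real.log t| ^ e * t ^ a) (𝓝[>] 0) (𝓝 0) := by
    refine (isLittleO_abs_log_rpow_rpow_nhdsGT_zero e (neg_lt_zero.2 ha)).tendsto_div_nhds_zero
      |>.congr' ?_
    filter_upwards [self_mem_nhdsWithin] with t ht
    rw [Real.rpow_neg (le_of_lt ht), div_inv_eq_mul, Real.rpow_natCast]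
  simpa only [add_zero, mul_zero, mul_add, mul_one, mul_comm, mul_assoc] using
    (hlog.add hpow).const_mul C

end Conclusion

/-- Main theorem, normalized form: for fixed `m ≤ d` there is `C(m,d) > 0` such that for every
non-constant polynomial `f` on `ℝⁿ` of total degree at most `d`, in which every variable enters
to a power at most `m`, with `a[f] = 1`, the density `ϱ_f` of `f(X)` (with `X` standard
Gaussian in `ℝⁿ`) satisfies `σ(ϱ_f, t) ≤ C(m,d) t^{1/m} (|ln t|^{d-m} + 1)` for all `t > 0`. -/
theorem sigma_bound_normalized (m d : ℕ) (hm : 1 ≤ m) (hmd : m ≤ d) :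
    ∃ C : ℝ, 0 < C ∧
      ∀ (n : ℕ) (f : MvPolynomial (Fin n) ℝ),
        f.totalDegree ≠ 0 →
        (∀ i : Fin n, f.degreeOf i ≤ m) →
        f.totalDegree ≤ d →
        topCoeff f = 1 →
        ∃ ρ : ℝ → ℝ, Integrable ρ ∧
          (stdGaussian n).map (fun x => MvPolynomial.eval x f)
            = volume.withDensity (fun s => ENNReal.ofReal (ρ s)) ∧
          ∀ t : ℝ, 0 < t →
            sigmaMod ρ t ≤ C * t ^ ((1 : ℝ) / m) * (|Real.log t| ^ (d - m) + 1) := by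
  have hC : 0 < sigmaBoundConst m d := one_pos.trans_le (one_le_sigmaBoundConst hm d)
  refine ⟨sigmaBoundConst m d, hC, fun n f hf0 hfm hfd hf1 => ?_⟩
  set ν := (gaussianPi (Fin n)).map fun x => MvPolynomial.eval x f
  have hσ (t : ℝ) (ht : 0 < t) : SigmaBound id ν t
      (sigmaBoundConst m d * t ^ ((1 : ℝ) / m) * (|Real.log t| ^ (d - m) + 1)) :=
    ((hasTopMonomial_of_one_le_topCoeff hfm hf1.ge).sigmaBound hf0 hfd hm ht).map
      f.continuous_eval.aemeasurable
  have hν : ν ≪ volume := absolutelyContinuous_of_sigmaBound hσ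
    (tendsto_mul_rpow_mul_abs_log_pow_add_one _ (by positivity) _)
  exact ⟨fun s => (ν.rnDeriv volume s).toReal, Measure.integrable_toReal_rnDeriv,
    (withDensity_ofReal_toReal_rnDeriv hν).symm,
    fun t ht => (hσ t ht).sigmaMod_le hν (by positivity)⟩
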